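/- arXiv:2204.10824 — 5 statements merged into one kernel-verified Lean document; each statement's English description precedes it below -/
import Mathlib

section
/- Let P ∈ ℝ^{n×n} be an orthogonal projector, let W ∈ ℝ^{n×n} be positive semidefinite, let γ ≥ 0, and set α = P + 2γ PWP. If B ∈ ℝ^{n×n} satisfies the Penrose conditions for α (so B is the Moore–Penrose pseudoinverse of α), then Bα = P. -/
open Matrix BigOperators

/-!
`α` is injective on the range of `P`: if `P y = y` and `α y = 0`, then
`0 = yᵀ α y = yᵀ y + 2γ yᵀ W y`, and both summands are nonnegative, so `y = 0`.
Since `α P = α`, the projector `B α` satisfies `B α P = B α`, hence `P B α = B α` by transposing.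
So the columns of `P - B α` lie in the range of `P`, and they are killed by `α` because
`α P = α = α B α`. Therefore `P - B α = 0`.
-/

/-- Let `P ∈ ℝ^{n×n}` be an orthogonal projector, `W` positive
semidefinite, `γ ≥ 0`, and `α = P + 2γ PWP`. If `B` satisfies the Penrose
conditions for `α` (so `B = α⁺`), then `Bα = P`. -/
theorem pinv_mul_eq_proj (n : ℕ) (P W B : Matrix (Fin n) (Fin n) ℝ)
    (hPsymm : Pᵀ = P) (hPidem : P * P = P)
    (hWsymm : Wᵀ = W) (hWpos : ∀ x : Fin n → ℝ, 0 ≤ x ⬝ᵥ (W *ᵥ x))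
    (γ : ℝ) (hγ : 0 ≤ γ)
    (α : Matrix (Fin n) (Fin n) ℝ) (hα : α = P + (2 * γ) • (P * W * P))
    (h1 : α * B * α = α) (h2 : B * α * B = B)
    (h3 : (α * B)ᵀ = α * B) (h4 : (B * α)ᵀ = B * α) :
    B * α = P := by
  have hαP : α * P = α := by
    rw [hα, Matrix.add_mul, hPidem, Matrix.smul_mul, Matrix.mul_assoc (P * W), hPidem]
  have hPBα : P * (B * α) = B * α := by
    have h : (B * α * P)ᵀ = (B * α)ᵀ := by rw [Matrix.mul_assoc, hαP]
    rwa [transpose_mul, hPsymm, h4] at h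
  have hαD : α * (P - B * α) = 0 := by
    rw [Matrix.mul_sub, hαP, ← Matrix.mul_assoc, h1, sub_self]
  have hPD : P * (P - B * α) = P - B * α := by
    rw [Matrix.mul_sub, hPidem, hPBα]
  have injOn : ∀ y : Fin n → ℝ, P *ᵥ y = y → α *ᵥ y = 0 → y = 0 := by
    intro y hPy hαy
    have hexp : α *ᵥ y = y + (2 * γ) • (P *ᵥ (W *ᵥ y)) := by
      rw [hα, add_mulVec, smul_mulVec, ← mulVec_mulVec, ← mulVec_mulVec, hPy]
    have hmove : y ⬝ᵥ (P *ᵥ (W *ᵥ y)) = y ⬝ᵥ (W *ᵥ y) := by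
      rw [dotProduct_mulVec, ← mulVec_transpose, hPsymm, hPy]
    have hquad : y ⬝ᵥ y + (2 * γ) * (y ⬝ᵥ (W *ᵥ y)) = 0 := by
      rw [← hmove, ← smul_eq_mul, ← dotProduct_smul, ← dotProduct_add, ← hexp, hαy,
        dotProduct_zero]
    have hyy : 0 ≤ y ⬝ᵥ y := Finset.sum_nonneg fun i _ => mul_self_nonneg (y i)
    have hW : 0 ≤ (2 * γ) * (y ⬝ᵥ (W *ᵥ y)) := mul_nonneg (by linarith) (hWpos y)
    exact dotProduct_self_eq_zero.mp (by linarith)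
  have hD : P - B * α = 0 := by
    apply Matrix.ext_of_mulVec_single
    intro i
    rw [zero_mulVec]
    apply injOn
    · rw [mulVec_mulVec, hPD]
    · rw [mulVec_mulVec, hαD, zero_mulVec]
  exact (sub_eq_zero.mp hD).symm
end

section
/- Let P ∈ ℝ^{n×n} be an orthogonal projector with trace(P) = r (i.e., of rank r), let W ∈ ℝ^{n×n} be positive semidefinite, let γ ≥ 0, and set α = P + 2γ PWP. If B ∈ ℝ^{n×n} satisfies the Penrose conditions for α, then the Frobenius norm of B satisfies ‖B‖_F ≤ √r. -/
/-!
Put `K = 2γ PWP`, a positive semidefinite matrix with `PK = KP = K`, so that `α = P + K`.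
If `αM = 0` then `0 = tr(MᵀαM) = ‖PM‖_F² + tr(MᵀKM)`, whence `PM = 0`: the kernel of `α` is
contained in that of `P` (`proj_mul_eq_zero`). Applied to `M = αB - 1`, this gives `αB = P`.
The Penrose conditions also give `PB = B`, so `P = B + KB` and
`r = tr P = ‖P‖_F² = ‖B‖_F² + 2 tr(BᵀKB) + ‖KB‖_F² ≥ ‖B‖_F²`.
-/

open Matrix BigOperators

/-- The Frobenius norm of a square real matrix. -/
noncomputable def frobNorm {n : ℕ} (M : Matrix (Fin n) (Fin n) ℝ) : ℝ :=
  Real.sqrt (∑ i, ∑ j, M i j ^ 2)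

lemma sum_sq_eq_trace {n : ℕ} (M : Matrix (Fin n) (Fin n) ℝ) :
    ∑ i, ∑ j, M i j ^ 2 = (Mᵀ * M).trace := by
  rw [Finset.sum_comm]
  simp [Matrix.trace, Matrix.mul_apply, sq]

lemma trace_transpose_mul_self_nonneg {n : ℕ} (M : Matrix (Fin n) (Fin n) ℝ) :
    0 ≤ (Mᵀ * M).trace := by
  rw [← sum_sq_eq_trace]
  positivity

lemma trace_quad_nonneg {n : ℕ} {W : Matrix (Fin n) (Fin n) ℝ}
    (hW : ∀ x : Fin n → ℝ, 0 ≤ x ⬝ᵥ (W *ᵥ x)) (M : Matrix (Fin n) (Fin n) ℝ) :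
    0 ≤ (Mᵀ * W * M).trace := by
  refine Finset.sum_nonneg fun i _ => ?_
  have h := hW (M.col i)
  rw [Matrix.mul_assoc]
  exact h

/-- Positivity of `K` forces the kernel of `P + K` into the kernel of `P`. -/
lemma proj_mul_eq_zero {n : ℕ} {P K M : Matrix (Fin n) (Fin n) ℝ}
    (hPsymm : Pᵀ = P) (hPidem : P * P = P)
    (hK : ∀ x : Fin n → ℝ, 0 ≤ x ⬝ᵥ (K *ᵥ x)) (hM : (P + K) * M = 0) :
    P * M = 0 := by
  have hsum : (Mᵀ * ((P + K) * M)).trace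
      = ((P * M)ᵀ * (P * M)).trace + (Mᵀ * K * M).trace := by
    rw [← Matrix.trace_add]
    congr 1
    have hPM : (P * M)ᵀ * (P * M) = Mᵀ * (P * M) := by
      rw [Matrix.transpose_mul, hPsymm, Matrix.mul_assoc, ← Matrix.mul_assoc P P M, hPidem]
    rw [hPM]
    noncomm_ring
  rw [hM, Matrix.mul_zero, Matrix.trace_zero] at hsum
  have hz : ((P * M)ᴴ * (P * M)).trace = 0 := by
    rw [Matrix.conjTranspose_eq_transpose_of_trivial]
    linarith [trace_transpose_mul_self_nonneg (P * M), trace_quad_nonneg hK M]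
  exact Matrix.trace_conjTranspose_mul_self_eq_zero_iff.mp hz

/-- Let `P ∈ ℝ^{n×n}` be an orthogonal projector with
`trace(P) = r`, `W` positive semidefinite, `γ ≥ 0`, and `α = P + 2γ PWP`.
If `B` satisfies the Penrose conditions for `α`, then `‖B‖_F ≤ √r`. -/
theorem pinv_frobenius_bound (n r : ℕ) (P W B : Matrix (Fin n) (Fin n) ℝ)
    (hPsymm : Pᵀ = P) (hPidem : P * P = P) (htr : P.trace = (r : ℝ))
    (hWsymm : Wᵀ = W) (hWpos : ∀ x : Fin n → ℝ, 0 ≤ x ⬝ᵥ (W *ᵥ x))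
    (γ : ℝ) (hγ : 0 ≤ γ)
    (α : Matrix (Fin n) (Fin n) ℝ) (hα : α = P + (2 * γ) • (P * W * P))
    (h1 : α * B * α = α) (h2 : B * α * B = B)
    (h3 : (α * B)ᵀ = α * B) (h4 : (B * α)ᵀ = B * α) :
    frobNorm B ≤ Real.sqrt r := by
  obtain ⟨K, hKdef⟩ : ∃ K, K = (2 * γ) • (P * W * P) := ⟨_, rfl⟩
  rw [← hKdef] at hα
  have hKpos : ∀ x : Fin n → ℝ, 0 ≤ x ⬝ᵥ (K *ᵥ x) := by
    intro x
    have h := hWpos (P *ᵥ x)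
    have e : x ⬝ᵥ (K *ᵥ x) = (2 * γ) * ((P *ᵥ x) ⬝ᵥ (W *ᵥ (P *ᵥ x))) := by
      rw [hKdef, Matrix.smul_mulVec, dotProduct_smul, smul_eq_mul, ← Matrix.mulVec_mulVec,
        ← Matrix.mulVec_mulVec, Matrix.dotProduct_mulVec x P, ← Matrix.mulVec_transpose, hPsymm]
    rw [e]
    positivity
  have hKsymm : Kᵀ = K := by
    simp [hKdef, Matrix.transpose_mul, hPsymm, hWsymm, Matrix.mul_assoc]
  have hPK : P * K = K := by
    rw [hKdef, Matrix.mul_smul, ← Matrix.mul_assoc, ← Matrix.mul_assoc, hPidem]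
  have hαsymm : αᵀ = α := by rw [hα, Matrix.transpose_add, hPsymm, hKsymm]
  have hPα : P * α = α := by rw [hα, Matrix.mul_add, hPidem, hPK]
  -- `B = (Bα)ᵀ B = α Bᵀ B`, so the range of `B` lies in that of `α`.
  have hPB : P * B = B := by
    have hB : B = α * (Bᵀ * B) := by
      rw [← Matrix.mul_assoc]
      nth_rewrite 1 [← h2, ← h4]
      rw [Matrix.transpose_mul, hαsymm]
    rw [hB, ← Matrix.mul_assoc, hPα]
  have hker : α * (α * B - 1) = 0 := by
    have h := congrArg Matrix.transpose h1
    rw [Matrix.transpose_mul, h3, hαsymm] at h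
    rw [Matrix.mul_sub, h, Matrix.mul_one, sub_self]
  have hαB : α * B = P := by
    rw [hα] at hker
    have h := proj_mul_eq_zero hPsymm hPidem hKpos hker
    rw [← hα, Matrix.mul_sub, ← Matrix.mul_assoc, hPα, Matrix.mul_one] at h
    exact sub_eq_zero.mp h
  have hP : P = B + K * B := by
    rw [← hαB, hα, Matrix.add_mul, hPB]
  have htrace : (r : ℝ) = (Bᵀ * B).trace + 2 * (Bᵀ * K * B).trace
      + ((K * B)ᵀ * (K * B)).trace := by
    have e : (B + K * B)ᵀ * (B + K * B)
        = Bᵀ * B + Bᵀ * K * B + Bᵀ * K * B + (K * B)ᵀ * (K * B) := by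
      rw [Matrix.transpose_add, Matrix.transpose_mul, hKsymm]
      noncomm_ring
    rw [← hP, hPsymm, hPidem] at e
    rw [← htr, e]
    simp only [Matrix.trace_add]
    ring
  unfold frobNorm
  apply Real.sqrt_le_sqrt
  rw [sum_sq_eq_trace]
  linarith [trace_quad_nonneg hKpos B, trace_transpose_mul_self_nonneg (K * B)]
end

section
/- Let P ∈ ℝ^{n×n} be an orthogonal projector, let W ∈ ℝ^{n×n} be any matrix, and let B ∈ ℝ^{n×n} satisfy B = BP (equivalently B(I_n − P) = 0). Set M = (I_n − P)WB. Then ‖sym(M)‖_F² = (1/2)‖M‖_F², i.e., ‖sym(M)‖_F = (√2/2)‖M‖_F. -/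
/-!
For every square real `M`, expanding the square gives
`‖sym(M)‖_F² = (‖M‖_F² + tr (M * M)) / 2`. For `M = (1 - P) * W * B` the trace vanishes because
`M * M = 0`: the inner factor is `B * (1 - P) = B - B * P = 0`.
-/

open Matrix BigOperators

/-- The symmetrization `sym(M) = (M + Mᵀ)/2` of a square matrix. -/
noncomputable def symPart {n : ℕ} (M : Matrix (Fin n) (Fin n) ℝ) : Matrix (Fin n) (Fin n) ℝ :=
  (1 / 2 : ℝ) • (M + Mᵀ)

theorem frobNorm_sq {n : ℕ} (M : Matrix (Fin n) (Fin n) ℝ) :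
    frobNorm M ^ 2 = ∑ i, ∑ j, M i j ^ 2 :=
  Real.sq_sqrt (Finset.sum_nonneg fun _ _ => Finset.sum_nonneg fun _ _ => sq_nonneg _)

theorem frobNorm_symPart_sq {n : ℕ} (M : Matrix (Fin n) (Fin n) ℝ) :
    frobNorm (symPart M) ^ 2 = (1 / 2) * (frobNorm M ^ 2 + (M * M).trace) := by
  have hswap : ∑ i, ∑ j, M j i ^ 2 = ∑ i, ∑ j, M i j ^ 2 := Finset.sum_comm
  have htr : (M * M).trace = ∑ i, ∑ j, M i j * M j i := by
    simp [Matrix.trace, Matrix.mul_apply]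
  have hexp : ∀ i j, symPart M i j ^ 2
      = (1 / 4) * M i j ^ 2 + (1 / 4) * M j i ^ 2 + (1 / 2) * (M i j * M j i) := by
    intro i j
    simp only [symPart, Matrix.smul_apply, Matrix.add_apply, Matrix.transpose_apply, smul_eq_mul]
    ring
  rw [frobNorm_sq, frobNorm_sq, htr]
  simp only [hexp, Finset.sum_add_distrib, ← Finset.mul_sum]
  rw [hswap]
  ring

/-- Let `P ∈ ℝ^{n×n}` be an orthogonal projector, `W` any
matrix, and `B` satisfy `B = BP`. With `M = (I−P)WB`, one has
`‖sym(M)‖_F² = (1/2) ‖M‖_F²`. -/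
theorem sym_norm_half (n : ℕ) (P W B : Matrix (Fin n) (Fin n) ℝ)
    (hPsymm : Pᵀ = P) (hPidem : P * P = P) (hB : B = B * P) :
    frobNorm (symPart ((1 - P) * W * B)) ^ 2
      = (1 / 2) * frobNorm ((1 - P) * W * B) ^ 2 := by
  have hBQ : B * (1 - P) = 0 := by
    rw [mul_sub, mul_one, ← hB, sub_self]
  have hMM : ((1 - P) * W * B) * ((1 - P) * W * B) = 0 := by
    calc ((1 - P) * W * B) * ((1 - P) * W * B)
        = (1 - P) * W * (B * (1 - P)) * (W * B) := by simp only [mul_assoc]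
      _ = 0 := by rw [hBQ, mul_zero, zero_mul]
  rw [frobNorm_symPart_sq, hMM, Matrix.trace_zero, add_zero]
end

section
/- Let Λ ∈ ℝ^{m×m} be a symmetric matrix that has at least one strictly positive eigenvalue, and let L ∈ ℝ^{m×m} be invertible. Then the matrix I_m + Λ L Lᵀ has a real eigenvalue strictly greater than 1; that is, there exist a nonzero vector v ∈ ℝ^m and a real number λ > 1 such that (I_m + Λ L Lᵀ) v = λ v. -/
open Matrix BigOperators

/-!
By congruence, the symmetric matrix `S = Lᵀ Λ L` inherits from `Λ` a direction of positive
quadratic form: if `Λ v = μ v` with `μ > 0`, then `w = L⁻¹ v` satisfies `wᵀ S w = μ |v|² > 0`.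
So `-S` is not positive semidefinite, and the spectral theorem gives `S u = c u` with `c > 0`,
`u ≠ 0`. Since `(Λ L) Lᵀ` and `Lᵀ (Λ L) = S` share their nonzero eigenvalues, `Λ L u` is an
eigenvector of `Λ L Lᵀ` for `c`, hence of `1 + Λ L Lᵀ` for `1 + c > 1`.
-/

/-- A real symmetric matrix whose quadratic form takes a positive value has a positive
eigenvalue. -/
lemma exists_pos_eigenvalue_of_dotProduct_pos {n : Type*} [Fintype n] [DecidableEq n]
    {S : Matrix n n ℝ} (hS : Sᵀ = S) {w : n → ℝ} (hw : 0 < w ⬝ᵥ (S *ᵥ w)) :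
    ∃ (c : ℝ) (u : n → ℝ), 0 < c ∧ u ≠ 0 ∧ S *ᵥ u = c • u := by
  have hH : (-S).IsHermitian := by
    simp [Matrix.IsHermitian, Matrix.conjTranspose_eq_transpose_of_trivial, hS]
  have hneg : ¬ (-S).PosSemidef := by
    intro h
    have h0 := h.re_dotProduct_nonneg w
    simp [Matrix.neg_mulVec] at h0
    linarith
  rw [hH.posSemidef_iff_eigenvalues_nonneg, Pi.le_def] at hneg
  push Not at hneg
  obtain ⟨i, hi⟩ := hneg
  refine ⟨-hH.eigenvalues i, ⇑(hH.eigenvectorBasis i), by simpa using hi, ?_, ?_⟩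
  · intro h0
    apply hH.eigenvectorBasis.toBasis.ne_zero i
    ext j
    simpa using congrFun h0 j
  · have h := hH.mulVec_eigenvectorBasis i
    rw [Matrix.neg_mulVec] at h
    rw [neg_smul, ← h, neg_neg]

/-- Let `Λ ∈ ℝ^{m×m}` be symmetric with at least one strictly
positive (real) eigenvalue, and let `L ∈ ℝ^{m×m}` be invertible. Then
`I_m + Λ L Lᵀ` has a real eigenvalue strictly greater than `1`: there exist a
nonzero `v ∈ ℝ^m` and `λ > 1` with `(I_m + Λ L Lᵀ) v = λ v`. -/
theorem unstable_eigenvalue (m : ℕ) (Λ L : Matrix (Fin m) (Fin m) ℝ)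
    (hΛ : Λᵀ = Λ)
    (hpos : ∃ (μ : ℝ) (v : Fin m → ℝ), 0 < μ ∧ v ≠ 0 ∧ Λ *ᵥ v = μ • v)
    (hL : IsUnit L) :
    ∃ (lam : ℝ) (v : Fin m → ℝ), 1 < lam ∧ v ≠ 0 ∧
      (1 + Λ * L * Lᵀ) *ᵥ v = lam • v := by
  obtain ⟨μ, v, hμ, hv, hΛv⟩ := hpos
  obtain ⟨w, rfl⟩ : ∃ w, L *ᵥ w = v := Matrix.mulVec_surjective_iff_isUnit.mpr hL v
  have hS : (Lᵀ * (Λ * L))ᵀ = Lᵀ * (Λ * L) := by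
    simp [Matrix.transpose_mul, hΛ, Matrix.mul_assoc]
  have hw : 0 < w ⬝ᵥ ((Lᵀ * (Λ * L)) *ᵥ w) := by
    rw [← Matrix.mulVec_mulVec, ← Matrix.mulVec_mulVec, hΛv, Matrix.dotProduct_mulVec,
      Matrix.vecMul_transpose, dotProduct_smul, smul_eq_mul]
    have h : 0 < star (L *ᵥ w) ⬝ᵥ (L *ᵥ w) := Matrix.dotProduct_star_self_pos_iff.mpr hv
    exact mul_pos hμ (by simpa using h)
  obtain ⟨c, u, hc, hu, hSu⟩ := exists_pos_eigenvalue_of_dotProduct_pos hS hw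
  refine ⟨1 + c, (Λ * L) *ᵥ u, by linarith, ?_, ?_⟩
  · intro h0
    rw [← Matrix.mulVec_mulVec, h0, Matrix.mulVec_zero] at hSu
    exact (smul_ne_zero hc.ne' hu) hSu.symm
  · rw [Matrix.add_mulVec, Matrix.one_mulVec, add_smul, one_smul, Matrix.mulVec_mulVec,
      Matrix.mul_assoc (Λ * L), ← Matrix.mulVec_mulVec u (Λ * L) (Lᵀ * (Λ * L)), hSu,
      Matrix.mulVec_smul]
end

section
/- Let X be a symmetric d-th order tensor of dimension n with d ≥ 2, let Q ∈ ℝ^{n×r} satisfy QᵀQ = I_r, and set P = QQᵀ. Then ⟨X·(I_n, Q, ..., Q), X·(Q, ..., Q)⟩_{-1} = ⟨X·(I_n, P, ..., P), X·(I_n, P, ..., P)⟩_{-1} Q, an identity of n×r matrices. (Consequently the Euclidean gradient of F(Q) = ‖X·(Q,...,Q)‖² equals 2w(P)Q, where w(P) = d⟨X·(I_n,P,...,P), X·(I_n,P,...,P)⟩_{-1}.) -/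
open Matrix BigOperators

/-!
Contracting two tensors whose modes have been multiplied by the same matrix `A` only involves the
Gram matrix `A * Aᵀ` in each mode (`contraction_eq_gram`). For `A = Q` this Gram matrix is
`Q * Qᵀ = P`; for `A = P` it is `P * Pᵀ = P`, since `QᵀQ = 1` makes `P` an orthogonal projector.
Hence contracting modes `2, …, d` after applying `Q`'s or after applying `P`'s gives the same
result, and the remaining factor `Q` in the first mode is pulled out by linearity.
-/

/-- Contracting `f·(A, …, A)` with `g·(A, …, A)` over all modes depends on `A` only through
`A * Aᵀ`: the sum over the contracted index factors over the modes. -/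
lemma contraction_eq_gram {m n s : ℕ} (f g : (Fin m → Fin n) → ℝ)
    (A : Matrix (Fin n) (Fin s) ℝ) :
    ∑ k : Fin m → Fin s, (∑ j, f j * ∏ t, A (j t) (k t)) * (∑ j, g j * ∏ t, A (j t) (k t))
      = ∑ i, ∑ j, f i * g j * ∏ t, (A * Aᵀ) (i t) (j t) := by
  have hprod (i j : Fin m → Fin n) : ∏ t, (A * Aᵀ) (i t) (j t)
      = ∑ k : Fin m → Fin s, (∏ t, A (i t) (k t)) * ∏ t, A (j t) (k t) := by
    simp only [Matrix.mul_apply, Matrix.transpose_apply, Fintype.prod_sum,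
      Finset.prod_mul_distrib]
  simp only [hprod, Finset.sum_mul_sum]
  simp only [Finset.mul_sum]
  rw [Finset.sum_comm]
  refine Finset.sum_congr rfl fun i _ => ?_
  rw [Finset.sum_comm]
  refine Finset.sum_congr rfl fun j _ => Finset.sum_congr rfl fun k _ => ?_
  ring

/-- Let `X` be a symmetric `d`-th order tensor of dimension `n`
with `d = e + 2 ≥ 2`, let `Q ∈ ℝ^{n×r}` satisfy `QᵀQ = I_r`, and set `P = QQᵀ`.
Then, as `n×r` matrices,
`⟨X·(I_n, Q, …, Q), X·(Q, …, Q)⟩₋₁ = ⟨X·(I_n, P, …, P), X·(I_n, P, …, P)⟩₋₁ Q`.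
Here `X·(A₁,…,A_d)` denotes the multilinear Tucker product and `⟨·,·⟩₋₁` the
contraction over all modes except the first. -/
theorem gradient_projector_identity (e n r : ℕ)
    (X : (Fin (e + 2) → Fin n) → ℝ)
    (hX : ∀ (σ : Equiv.Perm (Fin (e + 2))) (i : Fin (e + 2) → Fin n),
      X (i ∘ σ) = X i)
    (Q : Matrix (Fin n) (Fin r) ℝ) (hQ : Qᵀ * Q = 1)
    (P : Matrix (Fin n) (Fin n) ℝ) (hP : P = Q * Qᵀ) :
    (Matrix.of fun (a : Fin n) (c : Fin r) =>
        ∑ k : Fin (e + 1) → Fin r,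
          (∑ j : Fin (e + 1) → Fin n,
              X (Fin.cons a j) * ∏ t, Q (j t) (k t)) *
          (∑ j : Fin (e + 2) → Fin n,
              X j * (Q (j 0) c * ∏ t : Fin (e + 1), Q (j t.succ) (k t))))
      = (Matrix.of fun (a b : Fin n) =>
          ∑ k : Fin (e + 1) → Fin n,
            (∑ j : Fin (e + 1) → Fin n,
                X (Fin.cons a j) * ∏ t, P (j t) (k t)) *
            (∑ j : Fin (e + 1) → Fin n,
                X (Fin.cons b j) * ∏ t, P (j t) (k t))) * Q := by
  have hPP : P * Pᵀ = P := by
    rw [hP, Matrix.transpose_mul, Matrix.transpose_transpose, Matrix.mul_assoc,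
      ← Matrix.mul_assoc Qᵀ, hQ, Matrix.one_mul]
  ext a c
  -- Splitting off the first index moves the first-mode factor `Q` into the coefficients.
  have hsplit (k : Fin (e + 1) → Fin r) :
      ∑ j : Fin (e + 2) → Fin n, X j * (Q (j 0) c * ∏ t : Fin (e + 1), Q (j t.succ) (k t))
        = ∑ j : Fin (e + 1) → Fin n,
            (∑ b, X (Fin.cons b j) * Q b c) * ∏ t, Q (j t) (k t) := by
    rw [← (Fin.consEquiv fun _ : Fin (e + 2) => Fin n).sum_comp, Fintype.sum_prod_type,
      Finset.sum_comm]
    simp [Fin.consEquiv, Finset.sum_mul, mul_assoc]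
  simp only [Matrix.mul_apply, Matrix.of_apply, hsplit]
  rw [contraction_eq_gram (fun j => X (Fin.cons a j))
    (fun j => ∑ b, X (Fin.cons b j) * Q b c) Q, ← hP]
  simp only [fun b => contraction_eq_gram (fun j => X (Fin.cons a j))
    (fun j => X (Fin.cons b j)) P, hPP]
  simp only [Finset.mul_sum, Finset.sum_mul]
  conv_rhs => rw [Finset.sum_comm]
  refine Finset.sum_congr rfl fun i _ => ?_
  rw [Finset.sum_comm]
  refine Finset.sum_congr rfl fun b _ => Finset.sum_congr rfl fun j _ => ?_
  ring
end
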